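/- Let X be a real Banach space, let E be a finite-dimensional linear subspace of X, and let F be a closed linear subspace of X that is simultaneously strongly proximinal. Then E + F is simultaneously strongly proximinal. -/

import Mathlib

/-!
Write `G = E + F` and let `y n = e n + f n` be a minimizing sequence in `G` for a bounded set `A`.
It is bounded, so its image in `X ⧸ F` is a bounded sequence in the finite-dimensional image of `E`.
A subsequence of that image converges to the class of some `e ∈ E`, and lifting back gives
`g n ∈ F` such that `y (φ n) - (e + g n) → 0` (`exists_subseq_tendsto_sub`). As
`y ↦ sup_{a ∈ A} ‖a - y‖` is 1-Lipschitz, `e + g n` is again minimizing. Hence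
`d(A - e, F) = d(A, G)` and `g n` is minimizing in `F` for `A - e`. Strong proximinality of `F`
puts `g n` close to `P_F(A - e)`, and `e + P_F(A - e) ⊆ P_G(A)`. So every minimizing sequence in
`G` comes arbitrarily close to `P_G(A)` (`exists_mem_simBest_add`), which yields both
proximinality and strong proximinality of `G`.
-/

open Filter Topology Pointwise

variable {X : Type*} [NormedAddCommGroup X] [NormedSpace ℝ X]

/-- `simSup A y = sup_{a ∈ A} ‖a - y‖`. -/
noncomputable def simSup (A : Set X) (y : X) : ℝ := ⨆ a : A, ‖(a : X) - y‖

/-- `simDist A C = inf_{y ∈ C} sup_{a ∈ A} ‖a - y‖`. -/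
noncomputable def simDist (A C : Set X) : ℝ := ⨅ y : C, simSup A (y : X)

/-- The set of best simultaneous approximations `P_C(A)`. -/
def simBest (A C : Set X) : Set X := {y | y ∈ C ∧ simSup A y = simDist A C}

/-- The set `P_C(A, δ)`. -/
def simBestApprox (A C : Set X) (δ : ℝ) : Set X :=
  {y | y ∈ C ∧ simSup A y < simDist A C + δ}

/-- `C` is simultaneously proximinal. -/
def SimProximinal (C : Set X) : Prop :=
  ∀ A : Set X, A.Nonempty → Bornology.IsBounded A → (simBest A C).Nonempty

/-- `y` is a minimizing sequence in `C` for `A`. -/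
def IsMinimizing (A C : Set X) (y : ℕ → X) : Prop :=
  (∀ n, y n ∈ C) ∧ Tendsto (fun n => simSup A (y n)) atTop (𝓝 (simDist A C))

/-- Weak convergence of a sequence. -/
def WeakTendsto (y : ℕ → X) (c : X) : Prop :=
  ∀ f : X →L[ℝ] ℝ, Tendsto (fun n => f (y n)) atTop (𝓝 (f c))

/-- `C` is simultaneously approximatively compact. -/
def SimApproxCompact (C : Set X) : Prop :=
  ∀ A : Set X, A.Nonempty → Bornology.IsBounded A → ∀ y : ℕ → X, IsMinimizing A C y →
    ∃ c ∈ C, ∃ φ : ℕ → ℕ, StrictMono φ ∧ Tendsto (y ∘ φ) atTop (𝓝 c)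

/-- `C` is simultaneously approximatively weakly compact. -/
def SimApproxWeakCompact (C : Set X) : Prop :=
  ∀ A : Set X, A.Nonempty → Bornology.IsBounded A → ∀ y : ℕ → X, IsMinimizing A C y →
    ∃ c ∈ C, ∃ φ : ℕ → ℕ, StrictMono φ ∧ WeakTendsto (y ∘ φ) c

/-- `C` is simultaneously strongly proximinal. -/
def SimStronglyProximinal (C : Set X) : Prop :=
  SimProximinal C ∧ ∀ A : Set X, A.Nonempty → Bornology.IsBounded A → ∀ ε > (0 : ℝ),
    ∃ δ > (0 : ℝ), simBestApprox A C δ ⊆ simBest A C + Metric.closedBall (0 : X) ε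

/-- `C` is simultaneously weakly strongly proximinal. -/
def SimWeakStronglyProximinal (C : Set X) : Prop :=
  SimProximinal C ∧ ∀ A : Set X, A.Nonempty → Bornology.IsBounded A →
    ∀ V : Set X, V ∈ 𝓝 (0 : WeakSpace ℝ X) → ∃ δ > (0 : ℝ),
      simBestApprox A C δ ⊆ simBest A C + V

lemma simSup_bddAbove {A : Set X} (hA : Bornology.IsBounded A) (y : X) :
    BddAbove (Set.range fun a : A => ‖(a : X) - y‖) := by
  obtain ⟨R, hR⟩ := hA.exists_norm_le
  refine ⟨R + ‖y‖, ?_⟩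
  rintro _ ⟨a, rfl⟩
  exact (norm_sub_le _ _).trans (by gcongr; exact hR a a.2)

lemma norm_sub_le_simSup {A : Set X} (hA : Bornology.IsBounded A) {a : X} (ha : a ∈ A) (y : X) :
    ‖a - y‖ ≤ simSup A y :=
  le_ciSup (simSup_bddAbove hA y) ⟨a, ha⟩

lemma simSup_le_add {A : Set X} (hne : A.Nonempty) (hA : Bornology.IsBounded A) (y z : X) :
    simSup A y ≤ simSup A z + ‖z - y‖ := by
  have := hne.to_subtype
  refine ciSup_le fun a => ?_
  calc ‖(a : X) - y‖ = ‖((a : X) - z) + (z - y)‖ := by congr 1; abel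
    _ ≤ ‖(a : X) - z‖ + ‖z - y‖ := norm_add_le _ _
    _ ≤ _ := by gcongr; exact norm_sub_le_simSup hA a.2 z

lemma simDist_le {A C : Set X} {y : X} (hy : y ∈ C) : simDist A C ≤ simSup A y := by
  refine ciInf_le (f := fun y : C => simSup A (y : X)) ⟨0, ?_⟩ ⟨y, hy⟩
  rintro _ ⟨y, rfl⟩
  exact Real.iSup_nonneg fun _ => norm_nonneg _

lemma simSup_image_sub (A : Set X) (e y : X) :
    simSup ((fun a => a - e) '' A) y = simSup A (e + y) := by
  unfold simSup
  rw [iSup, iSup]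
  congr 1
  ext r
  simp [sub_sub]

/-- A bounded sequence in `E + F` is, along a subsequence, asymptotic to a sequence in a single
translate `e + F` with `e ∈ E`: the classes modulo `F` lie in a finite-dimensional space. -/
lemma exists_subseq_tendsto_sub (E F : Subspace ℝ X) [FiniteDimensional ℝ E]
    (hF : IsClosed (F : Set X)) {y : ℕ → X} (hy : ∀ n, y n ∈ (E : Set X) + (F : Set X))
    {R : ℝ} (hR : ∀ n, ‖y n‖ ≤ R) :
    ∃ e ∈ E, ∃ φ : ℕ → ℕ, StrictMono φ ∧ ∃ g : ℕ → X, (∀ n, g n ∈ F) ∧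
      Tendsto (fun n => ‖y (φ n) - (e + g n)‖) atTop (𝓝 0) := by
  have : IsClosed (F : Set X) := hF
  let Q : Submodule ℝ (X ⧸ F) := E.map F.mkQ
  have hQ : ∀ n, F.mkQ (y n) ∈ Q := by
    intro n
    obtain ⟨e, he, f, hf, hef⟩ := hy n
    refine ⟨e, he, ?_⟩
    have : F.mkQ f = 0 := by simpa using hf
    rw [← hef, map_add, this, add_zero]
  have : ProperSpace Q := FiniteDimensional.proper ℝ Q
  let q : ℕ → Q := fun n => ⟨F.mkQ (y n), hQ n⟩
  have hq : ∀ n, q n ∈ Metric.closedBall (0 : Q) R := by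
    intro n
    rw [mem_closedBall_zero_iff]
    exact (Submodule.Quotient.norm_mk_le F (y n)).trans (hR n)
  obtain ⟨⟨_, e, he, rfl⟩, -, φ, hφ, hlim⟩ :=
    tendsto_subseq_of_bounded (Metric.isBounded_closedBall) hq
  have hlim' : Tendsto (fun n => ‖(Submodule.Quotient.mk (y (φ n) - e) : X ⧸ F)‖)
      atTop (𝓝 0) := by
    have := tendsto_iff_norm_sub_tendsto_zero.1 hlim
    exact this
  -- Lift each class to a representative whose norm exceeds the quotient norm by at most `1/(n+1)`.
  have hlift : ∀ n : ℕ, ∃ m : X, (Submodule.Quotient.mk m : X ⧸ F)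
      = Submodule.Quotient.mk (y (φ n) - e) ∧
      ‖m‖ < ‖(Submodule.Quotient.mk (y (φ n) - e) : X ⧸ F)‖ + 1 / ((n : ℝ) + 1) := fun n =>
    Submodule.Quotient.norm_mk_lt _ (by positivity)
  choose m hm hmlt using hlift
  refine ⟨e, he, φ, hφ, fun n => y (φ n) - e - m n, fun n => ?_, ?_⟩
  · exact (Submodule.Quotient.eq F).1 (hm n).symm
  · have h0 := hlim'.add tendsto_one_div_add_atTop_nhds_zero_nat
    rw [add_zero] at h0
    refine squeeze_zero (fun _ => norm_nonneg _) (fun n => ?_) h0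
    have : y (φ n) - (e + (y (φ n) - e - m n)) = m n := by abel
    rw [this]
    exact (hmlt n).le

lemma exists_mem_simBest_add (E F : Subspace ℝ X) [FiniteDimensional ℝ E]
    (hF : IsClosed (F : Set X)) (hFsp : SimStronglyProximinal (F : Set X))
    {A : Set X} (hne : A.Nonempty) (hA : Bornology.IsBounded A) {y : ℕ → X}
    (hy : IsMinimizing A ((E : Set X) + (F : Set X)) y) {ε : ℝ} (hε : 0 < ε) :
    ∃ n, y n ∈ simBest A ((E : Set X) + (F : Set X)) + Metric.closedBall (0 : X) ε := by
  obtain ⟨hyG, hlim⟩ := hy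
  obtain ⟨M, hM⟩ := hlim.bddAbove_range
  obtain ⟨a, ha⟩ := hne
  have hR : ∀ n, ‖y n‖ ≤ ‖a‖ + M := fun n => by
    have h1 := norm_sub_le_simSup hA ha (y n)
    have h2 : simSup A (y n) ≤ M := hM ⟨n, rfl⟩
    have h3 := norm_sub_norm_le (y n) a
    rw [norm_sub_rev] at h3
    linarith
  obtain ⟨e, he, φ, hφ, g, hg, hyg⟩ := exists_subseq_tendsto_sub E F hF hyG hR
  set G : Set X := (E : Set X) + (F : Set X) with hG
  set B : Set X := (fun a => a - e) '' A with hB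
  have hBne : B.Nonempty := ⟨_, a, ha, rfl⟩
  have hBb : Bornology.IsBounded B := by
    obtain ⟨R, hR⟩ := hA.exists_norm_le
    refine isBounded_iff_forall_norm_le.2 ⟨R + ‖e‖, ?_⟩
    rintro _ ⟨a, ha, rfl⟩
    exact (norm_sub_le _ _).trans (by gcongr; exact hR a ha)
  have hub : Tendsto (fun n => simSup A (y (φ n)) + ‖y (φ n) - (e + g n)‖) atTop
      (𝓝 (simDist A G)) := by
    simpa using (hlim.comp hφ.tendsto_atTop).add hyg
  have hle : ∀ n, simSup B (g n) ≤ simSup A (y (φ n)) + ‖y (φ n) - (e + g n)‖ := fun n => by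
    rw [hB, simSup_image_sub]
    exact simSup_le_add ⟨a, ha⟩ hA _ _
  have hdist : simDist B (F : Set X) = simDist A G := by
    apply le_antisymm
    · exact ge_of_tendsto' hub fun n => (simDist_le (hg n)).trans (hle n)
    · have : Nonempty (F : Set X) := ⟨⟨0, F.zero_mem⟩⟩
      refine le_ciInf fun f => ?_
      rw [hB, simSup_image_sub]
      exact simDist_le ⟨e, he, f, f.2, rfl⟩
  obtain ⟨δ, hδ, hsub⟩ := hFsp.2 B hBne hBb (ε / 2) (half_pos hε)
  have hev1 := hub.eventually_lt_const (lt_add_of_pos_right (simDist A G) hδ)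
  have hev2 := hyg.eventually_lt_const (half_pos hε)
  obtain ⟨n, hn1, hn2⟩ := (hev1.and hev2).exists
  have hmem : g n ∈ simBestApprox B (F : Set X) δ :=
    ⟨hg n, by rw [hdist]; exact (hle n).trans_lt hn1⟩
  obtain ⟨p, ⟨hpF, hp⟩, b, hb, hpb⟩ := hsub hmem
  rw [mem_closedBall_zero_iff] at hb
  refine ⟨φ n, e + p, ⟨⟨e, he, p, hpF, rfl⟩, ?_⟩, y (φ n) - (e + p), ?_, by simp⟩
  · rw [← hdist, ← hp, hB, simSup_image_sub]
  · rw [mem_closedBall_zero_iff]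
    have hpb' : p + b = g n := hpb
    calc ‖y (φ n) - (e + p)‖ = ‖(y (φ n) - (e + g n)) + b‖ := by
          rw [← hpb']; congr 1; abel
      _ ≤ ‖y (φ n) - (e + g n)‖ + ‖b‖ := norm_add_le _ _
      _ ≤ ε := by linarith

lemma isMinimizing_of_mem_simBestApprox {A C : Set X} {y : ℕ → X}
    (hy : ∀ n : ℕ, y n ∈ simBestApprox A C (1 / ((n : ℝ) + 1))) : IsMinimizing A C y := by
  refine ⟨fun n => (hy n).1, ?_⟩
  have h := (tendsto_const_nhds (x := simDist A C)).add
    (tendsto_one_div_add_atTop_nhds_zero_nat (𝕜 := ℝ))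
  rw [add_zero] at h
  exact tendsto_of_tendsto_of_tendsto_of_le_of_le tendsto_const_nhds h
    (fun n => simDist_le (hy n).1) (fun n => (hy n).2.le)

/-- The sum of a finite-dimensional subspace and a simultaneously strongly proximinal closed
subspace is simultaneously strongly proximinal. -/
theorem findim_add_simStronglyProximinal_subspace [CompleteSpace X]
    (E F : Subspace ℝ X) [FiniteDimensional ℝ E] (hF : IsClosed (F : Set X))
    (hFsp : SimStronglyProximinal (F : Set X)) :
    SimStronglyProximinal ((E : Set X) + (F : Set X)) := by
  constructor
  · intro A hne hA
    have : Nonempty ((E : Set X) + (F : Set X) : Set X) :=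
      ⟨⟨0, 0, E.zero_mem, 0, F.zero_mem, add_zero 0⟩⟩
    have hex : ∀ n : ℕ, ∃ z,
        z ∈ simBestApprox A ((E : Set X) + (F : Set X)) (1 / ((n : ℝ) + 1)) := fun n => by
      obtain ⟨z, hz⟩ := exists_lt_of_ciInf_lt (lt_add_of_pos_right
        (simDist A ((E : Set X) + (F : Set X))) (by positivity : 0 < 1 / ((n : ℝ) + 1)))
      exact ⟨z, z.2, hz⟩
    choose y hy using hex
    obtain ⟨n, p, hp, -⟩ := exists_mem_simBest_add E F hF hFsp hne hA
      (isMinimizing_of_mem_simBestApprox hy) one_pos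
    exact ⟨p, hp⟩
  · intro A hne hA ε hε
    by_contra! hcon
    have hex : ∀ n : ℕ, ∃ z,
        z ∈ simBestApprox A ((E : Set X) + (F : Set X)) (1 / ((n : ℝ) + 1)) ∧
        z ∉ simBest A ((E : Set X) + (F : Set X)) + Metric.closedBall (0 : X) ε := fun n =>
      Set.not_subset.1 (hcon _ (by positivity))
    choose y hy hy' using hex
    obtain ⟨n, hn⟩ := exists_mem_simBest_add E F hF hFsp hne hA
      (isMinimizing_of_mem_simBestApprox hy) hε
    exact hy' n hn
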